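/- Irreducibility of the transfer matrix family (Lemma 5.6): Let 0 < r < 1 and t = √(1−r²), and let I ⊆ ℝ be a nonempty open interval. If a linear subspace V ⊆ ℝ⁴ satisfies τ(T_1(α,β,γ)) V ⊆ V for all (α,β,γ) ∈ I×I×I, then V = {0} or V = ℝ⁴. -/

import Mathlib

/-!
Identify `ℝ⁴` with `ℂ²` via `(p, q) ↦ (Re p, -Im p, Re q, -Im q)` (`emb`); under this map `τ(A)`
becomes the ordinary action of `A`. The transfer matrix splits as
`T₁(α,β,γ) = b(β) e^{iγ} • M + (e^{-iα} / r) • E₂₂`, where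
`b(β) = (r e^{-iβ} - 1) / (r (e^{-iβ} - r))` is nonzero and `M = w wᵀ` with `w = (r, -t)`.
Differences in `α` alone, resp. `γ` alone, isolate the two summands, and since differences of points
on any arc of the unit circle span `ℂ` over `ℝ` (`mem_of_arc_differences`), an invariant subspace is
stable under `z • E₂₂` and `z • M` for every `z : ℂ`. If it contains a vector `(p, q)` with `q ≠ 0`,
it contains `(0, z)` for all `z`, and then, applying `M`, everything; a nonzero
`(p, 0)` is moved by `M` to a vector with nonzero second coordinate.
-/

open Complex

namespace RQWTransfer

/-- The transfer matrix `T_1(α,β,γ)` (the case `z = 1`), with `t = √(1-r²)`. -/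
noncomputable def T1 (r : ℝ) (α β γ : ℝ) : Matrix (Fin 2) (Fin 2) ℂ :=
  let t : ℝ := Real.sqrt (1 - r ^ 2)
  ((r * Complex.exp (-(Complex.I * β)) - 1) * Complex.exp (Complex.I * γ) /
      (r * (Complex.exp (-(Complex.I * β)) - r))) •
    !![(r : ℂ) ^ 2, -((t : ℂ) * r);
       -((t : ℂ) * r),
        Complex.exp (-(Complex.I * (α + γ))) *
            (Complex.exp (-(Complex.I * β)) - r) /
            (r * Complex.exp (-(Complex.I * β)) - 1) + (t : ℂ) ^ 2]

/-- The real representation `τ : M₂(ℂ) → M₄(ℝ)` replacing each complex entry `z` by the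
`2 × 2` real block `Re(z)·I + Im(z)·J`, where `J = [[0,1],[-1,0]]`. -/
def tauM (A : Matrix (Fin 2) (Fin 2) ℂ) : Matrix (Fin 4) (Fin 4) ℝ :=
  fun p s =>
    let a : ℂ := A ⟨p.val / 2, by omega⟩ ⟨s.val / 2, by omega⟩
    if p.val % 2 = s.val % 2 then a.re
    else if p.val % 2 = 0 then a.im else -a.im

/-- The `ℝ`-linear identification `ℂ² → ℝ⁴` that intertwines `A` with `tauM A`. The signs come
from `J = [[0,1],[-1,0]]`, which represents multiplication by `i` in the coordinates
`(Re, -Im)`. -/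
def emb : ℂ × ℂ →ₗ[ℝ] (Fin 4 → ℝ) where
  toFun x := ![x.1.re, -x.1.im, x.2.re, -x.2.im]
  map_add' x y := by
    ext i; fin_cases i <;> simp <;> ring
  map_smul' c x := by
    ext i; fin_cases i <;> simp

lemma emb_surjective : Function.Surjective emb := by
  intro x
  refine ⟨(⟨x 0, -x 1⟩, ⟨x 2, -x 3⟩), ?_⟩
  ext i; fin_cases i <;> simp [emb]

lemma tauM_mulVec_emb (A : Matrix (Fin 2) (Fin 2) ℂ) (p q : ℂ) :
    (tauM A).mulVec (emb (p, q)) =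
      emb (A 0 0 * p + A 0 1 * q, A 1 0 * p + A 1 1 * q) := by
  ext i
  fin_cases i <;>
    simp [emb, tauM, Matrix.mulVec, dotProduct, Fin.sum_univ_four] <;> ring

/-- Differences of points on an arc of the unit circle span `ℂ` over `ℝ`: at the midpoint `m` of
the arc, the second difference is a nonzero real multiple of `e^{im}` and the symmetric first
difference a nonzero real multiple of `i e^{im}`. -/
lemma mem_of_arc_differences {u v : ℝ} (huv : u < v) (S : Submodule ℝ ℂ)
    (h : ∀ θ ∈ Set.Ioo u v, ∀ θ' ∈ Set.Ioo u v,
      exp (Complex.I * θ) - exp (Complex.I * θ') ∈ S) (z : ℂ) : z ∈ S := by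
  obtain ⟨m, d, hd0, hd1, hmu, hmv⟩ :
      ∃ m d : ℝ, 0 < d ∧ d < 1 ∧ u < m - d ∧ m + d < v := by
    refine ⟨(u + v) / 2, min ((v - u) / 4) (1 / 2), ?_, ?_, ?_, ?_⟩
    · exact lt_min (by linarith) (by norm_num)
    · exact (min_le_right _ _).trans_lt (by norm_num)
    · linarith [min_le_left ((v - u) / 4) (1 / 2 : ℝ)]
    · linarith [min_le_left ((v - u) / 4) (1 / 2 : ℝ)]
  have hsin : 0 < Real.sin d :=
    Real.sin_pos_of_pos_of_lt_pi hd0 (by linarith [Real.pi_gt_three])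
  have hcos : Real.cos d - 1 ≠ 0 := by
    have := Real.sin_sq_add_cos_sq d
    intro hc
    have hc' : Real.cos d = 1 := by linarith
    rw [hc'] at this
    nlinarith
  have hm : m ∈ Set.Ioo u v := ⟨by linarith, by linarith⟩
  have hp : m + d ∈ Set.Ioo u v := ⟨by linarith, by linarith⟩
  have hq : m - d ∈ Set.Ioo u v := ⟨by linarith, by linarith⟩
  set e := exp (Complex.I * m) with he
  have hep : exp (Complex.I * (m + d : ℝ)) = e * (Real.cos d + Real.sin d * Complex.I) := by
    rw [Complex.ofReal_cos, Complex.ofReal_sin, ← Complex.exp_mul_I, he, ← Complex.exp_add]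
    congr 1; push_cast; ring
  have heq : exp (Complex.I * (m - d : ℝ)) = e * (Real.cos d - Real.sin d * Complex.I) := by
    have : (Real.cos d - Real.sin d * Complex.I : ℂ)
        = Complex.cos (-d : ℂ) + Complex.sin (-d : ℂ) * Complex.I := by
      rw [Complex.cos_neg, Complex.sin_neg]; push_cast; ring
    rw [this, ← Complex.exp_mul_I, he, ← Complex.exp_add]
    congr 1; push_cast; ring
  have h1 := h _ hp _ hm
  have h2 := h _ hq _ hm
  have h3 := h _ hp _ hq
  rw [hep] at h1 h3
  rw [heq] at h2 h3
  have he0 : e ≠ 0 := Complex.exp_ne_zero _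
  have hz : z = ((z / e).re / (2 * (Real.cos d - 1))) •
        ((e * (Real.cos d + Real.sin d * Complex.I) - e) +
          (e * (Real.cos d - Real.sin d * Complex.I) - e)) +
      ((z / e).im / (2 * Real.sin d)) •
        (e * (Real.cos d + Real.sin d * Complex.I) -
          e * (Real.cos d - Real.sin d * Complex.I)) := by
    have hs' : (Real.sin d : ℂ) ≠ 0 := by exact_mod_cast hsin.ne'
    have hc' : (Real.cos d : ℂ) - 1 ≠ 0 := by exact_mod_cast hcos
    have hze : z = e * ((z / e).re + (z / e).im * Complex.I) := by
      rw [Complex.re_add_im]; field_simp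
    generalize (z / e).re = x at hze ⊢
    generalize (z / e).im = y at hze ⊢
    rw [hze, Complex.real_smul, Complex.real_smul]
    generalize Real.cos d = c at hc' ⊢
    generalize Real.sin d = s at hs' ⊢
    push_cast
    field_simp
    ring
  rw [hz]
  exact S.add_mem (S.smul_mem _ (S.add_mem h1 h2)) (S.smul_mem _ h3)

/-- The decomposition `T₁ = b e^{iγ} • w wᵀ + (e^{-iα} / r) • E₂₂` with `w = (r, -t)` and a scalar
`b ≠ 0` depending only on `β`, applied to a vector of `ℂ²`. -/
lemma exists_T1_action (r : ℝ) (hr0 : 0 < r) (hr1 : r < 1) (β : ℝ) :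
    ∃ b : ℂ, b ≠ 0 ∧ ∀ α γ : ℝ, ∀ p q : ℂ,
      (tauM (T1 r α β γ)).mulVec (emb (p, q)) =
        emb (exp (Complex.I * γ) * (b * (r * (r * p - Real.sqrt (1 - r ^ 2) * q))),
          exp (Complex.I * γ) *
              (b * (-Real.sqrt (1 - r ^ 2) * (r * p - Real.sqrt (1 - r ^ 2) * q))) +
            exp (Complex.I * (-α : ℝ)) * (q / r)) := by
  have hnorm : ‖exp (-(Complex.I * β))‖ = 1 := by
    rw [Complex.norm_exp]; simp
  have hrc : (r : ℂ) ≠ 0 := by exact_mod_cast hr0.ne'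
  have h1 : exp (-(Complex.I * β)) - r ≠ 0 := by
    intro h
    rw [sub_eq_zero.mp h, Complex.norm_real, Real.norm_of_nonneg hr0.le] at hnorm
    linarith
  have h2 : r * exp (-(Complex.I * β)) - 1 ≠ 0 := by
    intro h
    have := congrArg norm (sub_eq_zero.mp h)
    rw [norm_mul, hnorm, Complex.norm_real, Real.norm_of_nonneg hr0.le] at this
    simp at this
    linarith
  refine ⟨(r * exp (-(Complex.I * β)) - 1) / (r * (exp (-(Complex.I * β)) - r)),
    div_ne_zero h2 (mul_ne_zero hrc h1), fun α γ p q => ?_⟩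
  have hexp : exp (-(Complex.I * (α + γ))) * exp (Complex.I * γ)
      = exp (Complex.I * (-α : ℝ)) := by
    rw [← Complex.exp_add]; congr 1; push_cast; ring
  rw [tauM_mulVec_emb, ← hexp]
  simp only [T1, Matrix.smul_apply, Matrix.of_apply, Matrix.cons_val', Matrix.cons_val_zero,
    Matrix.cons_val_one, Matrix.cons_val_fin_one, smul_eq_mul]
  generalize exp (-(Complex.I * β)) = w at h1 h2 ⊢
  congr 2
  · field_simp
    ring
  · field_simp
    ring

/-- **Lemma 5.6 (irreducibility of the transfer matrix family).**  Let `0 < r < 1` and let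
`I ⊆ ℝ` be a nonempty open interval.  Any subspace `V ⊆ ℝ⁴` invariant under all the
matrices `τ(T_1(α,β,γ))` with `(α,β,γ) ∈ I³` is trivial: `V = {0}` or `V = ℝ⁴`. -/
theorem transfer_matrix_irreducible
    (r : ℝ) (hr0 : 0 < r) (hr1 : r < 1)
    (I : Set ℝ) (hI : ∃ u v : ℝ, u < v ∧ I = Set.Ioo u v)
    (V : Submodule ℝ (Fin 4 → ℝ))
    (hV : ∀ α ∈ I, ∀ β ∈ I, ∀ γ ∈ I, ∀ x ∈ V, (tauM (T1 r α β γ)).mulVec x ∈ V) :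
    V = ⊥ ∨ V = ⊤ := by
  obtain ⟨u, v, huv, rfl⟩ := hI
  obtain ⟨m, hm⟩ : (Set.Ioo u v).Nonempty := Set.nonempty_Ioo.mpr huv
  obtain ⟨b, hb, hT⟩ := exists_T1_action r hr0 hr1 m
  set t := Real.sqrt (1 - r ^ 2) with ht
  have ht0 : (t : ℂ) ≠ 0 := by
    have : 0 < t := Real.sqrt_pos.mpr (by nlinarith)
    exact_mod_cast this.ne'
  have hrc : (r : ℂ) ≠ 0 := by exact_mod_cast hr0.ne'
  have hstep : ∀ α ∈ Set.Ioo u v, ∀ γ ∈ Set.Ioo u v, ∀ p q : ℂ, emb (p, q) ∈ V → _ ∈ V :=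
    fun α hα γ hγ p q hpq => hT α γ p q ▸ hV α hα m hm γ hγ _ hpq
  -- Differences in `α` give stability under `z • E₂₂`.
  have hE : ∀ p q : ℂ, emb (p, q) ∈ V → ∀ z : ℂ, emb (0, z * q) ∈ V := by
    intro p q hpq z
    let f : ℂ →ₗ[ℝ] (Fin 4 → ℝ) :=
      emb ∘ₗ (LinearMap.inr ℝ ℂ ℂ) ∘ₗ (LinearMap.mulRight ℝ (q / r : ℂ))
    have hf : ∀ z, f z = emb (0, z * (q / r)) := fun z => rfl
    have key := mem_of_arc_differences (neg_lt_neg huv) (V.comap f) (fun θ hθ θ' hθ' => by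
      have h1 := hstep (-θ) ⟨by linarith [hθ.2], by linarith [hθ.1]⟩ m hm p q hpq
      have h2 := hstep (-θ') ⟨by linarith [hθ'.2], by linarith [hθ'.1]⟩ m hm p q hpq
      have h3 := V.sub_mem h1 h2
      rw [← map_sub] at h3
      rw [Submodule.mem_comap, hf]
      convert h3 using 2
      ext1
      · simp
      · simp only [Prod.snd_sub, neg_neg]; ring) (z * r)
    rw [Submodule.mem_comap, hf] at key
    convert key using 3
    field_simp
  -- Differences in `γ` give stability under `z • w wᵀ`.
  have hM : ∀ p q : ℂ, emb (p, q) ∈ V → ∀ z : ℂ,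
      emb (z * (r * (r * p - t * q)), z * (-t * (r * p - t * q))) ∈ V := by
    intro p q hpq z
    let f : ℂ →ₗ[ℝ] (Fin 4 → ℝ) :=
      emb ∘ₗ ((LinearMap.mulRight ℝ (b * (r * (r * p - t * q)))).prod
        (LinearMap.mulRight ℝ (b * (-t * (r * p - t * q)))))
    have hf : ∀ z, f z = emb (z * (b * (r * (r * p - t * q))),
        z * (b * (-t * (r * p - t * q)))) := fun z => rfl
    have key := mem_of_arc_differences huv (V.comap f) (fun θ hθ θ' hθ' => by
      have h3 := V.sub_mem (hstep m hm θ hθ p q hpq) (hstep m hm θ' hθ' p q hpq)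
      rw [← map_sub] at h3
      rw [Submodule.mem_comap, hf]
      convert h3 using 2
      ext1
      · simp only [Prod.fst_sub]; ring
      · simp only [Prod.snd_sub]; ring) (z / b)
    rw [Submodule.mem_comap, hf] at key
    convert key using 3 <;> field_simp
  have hfull : ∀ p q : ℂ, emb (p, q) ∈ V → q ≠ 0 → V = ⊤ := by
    intro p q hpq hq
    have h2 : ∀ z : ℂ, emb (0, z) ∈ V := fun z => by
      have := hE p q hpq (z / q)
      rwa [div_mul_cancel₀ _ hq] at this
    rw [eq_top_iff]
    intro x _
    obtain ⟨⟨x1, x2⟩, rfl⟩ := emb_surjective x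
    -- `w wᵀ e₂ = (-rt, t²)`, rescaled to have first coordinate `x1` and corrected by `(0, ·)`.
    have h3 := V.add_mem (hM 0 1 (h2 1) (x1 / (-(r * t)))) (h2 (x2 + x1 * t / r))
    rw [← map_add] at h3
    convert h3 using 2
    ext1
    · simp only [Prod.fst_add]; field_simp; ring
    · simp only [Prod.snd_add]; field_simp; ring
  by_cases hbot : V = ⊥
  · exact Or.inl hbot
  right
  obtain ⟨x, hxV, hx0⟩ := V.ne_bot_iff.mp hbot
  obtain ⟨⟨p, q⟩, rfl⟩ := emb_surjective x
  by_cases hq : q = 0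
  · subst hq
    have hp : p ≠ 0 := by
      rintro rfl
      exact hx0 (map_zero emb)
    refine hfull _ _ (hM p 0 hxV 1) ?_
    simp [ht0, hrc, hp]
  · exact hfull p q hxV hq

end RQWTransfer
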